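/- Define T*(n) = sup_{α>1} (1 − 1/α)/ln((α−1)·n + 1). For every n > 2, one has (1 − 1/ln n)/ln((ln n − 1)·n + 1) ≤ T*(n) < 1/ln(n−1). Consequently, T*(n)·ln n → 1 as n → ∞, i.e. T*(n) ~ 1/ln n. -/

import Mathlib

open Set Filter Topology

/-- The critical temperature of the complete graph on `n` nodes:
`T*(n) = sup_{α>1} (1 − 1/α)/ln((α−1)·n + 1)`. -/
noncomputable def Tstar (n : ℕ) : ℝ :=
  sSup {t : ℝ | ∃ α : ℝ, 1 < α ∧ t = (1 - 1/α) / Real.log ((α - 1) * n + 1)}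

/-!
Write `(α - 1) x + 1 = α ((1 - 1/α) x + 1/α)`. Concavity of the logarithm bounds the logarithm of
the second factor below by `(1 - 1/α) log x`, and `log α ≥ 1 - 1/α`, so every ratio in the supremum
is at most `1 / (log x + 1)`. Conversely `(α - 1) x + 1 ≤ α x`, so the ratio at `α` is at least
`(1 - 1/α) / (log α + log x)`; at `α = log x` this is asymptotic to `1 / log x`, because
`1 / α → 0` and `log α = o(log x)`.
-/

/-- The quantity whose supremum over `α > 1` is the critical temperature, with the number of nodes
replaced by a real parameter `x`. -/
noncomputable def temperatureRatio (x α : ℝ) : ℝ :=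
  (1 - 1 / α) / Real.log ((α - 1) * x + 1)

/-- The critical temperature as a function of a real number `x` of nodes, used so that the
asymptotics hold along the reals. When `exp (-1) < x`, the supremum is finite and not the junk
value `0` of `sSup`. -/
noncomputable def criticalTemperature (x : ℝ) : ℝ :=
  sSup (temperatureRatio x '' Ioi 1)

theorem Tstar_eq_criticalTemperature (n : ℕ) : Tstar n = criticalTemperature n := by
  simp only [Tstar, criticalTemperature, temperatureRatio, image, mem_Ioi, eq_comm]

section Ratio

variable {x α : ℝ}

theorem one_sub_one_div_mul_log_le (hx : 0 < x) (hα : 1 ≤ α) :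
    (1 - 1 / α) * Real.log x ≤ Real.log ((1 - 1 / α) * x + 1 / α) := by
  have hα_inv : 1 / α ≤ 1 := div_le_one_of_le₀ hα (by linarith)
  simpa only [smul_eq_mul, Real.log_one, mul_zero, mul_one, add_zero] using
    strictConcaveOn_log_Ioi.concaveOn.2 (mem_Ioi.2 hx) (mem_Ioi.2 one_pos)
      (sub_nonneg.2 hα_inv) (by positivity : 0 ≤ 1 / α) (sub_add_cancel 1 (1 / α))

theorem one_sub_one_div_mul_log_add_one_le (hx : 0 < x) (hα : 1 ≤ α) :
    (1 - 1 / α) * (Real.log x + 1) ≤ Real.log ((α - 1) * x + 1) := by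
  have hα_pos : 0 < α := by linarith
  have hα_inv : 1 / α ≤ 1 := div_le_one_of_le₀ hα hα_pos.le
  have mean_pos : 0 < (1 - 1 / α) * x + 1 / α :=
    add_pos_of_nonneg_of_pos (mul_nonneg (sub_nonneg.2 hα_inv) hx.le) (by positivity)
  have log_ge : 1 - 1 / α ≤ Real.log α := by
    simpa only [one_div] using Real.one_sub_inv_le_log_of_pos hα_pos
  calc (1 - 1 / α) * (Real.log x + 1)
      = (1 - 1 / α) + (1 - 1 / α) * Real.log x := by ring
    _ ≤ Real.log α + Real.log ((1 - 1 / α) * x + 1 / α) :=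
        add_le_add log_ge (one_sub_one_div_mul_log_le hx hα)
    _ = Real.log (α * ((1 - 1 / α) * x + 1 / α)) :=
        (Real.log_mul hα_pos.ne' mean_pos.ne').symm
    _ = Real.log ((α - 1) * x + 1) := by
        congr 1
        field_simp

theorem log_sub_one_mul_add_one_pos (hx : 0 < x) (hα : 1 < α) :
    0 < Real.log ((α - 1) * x + 1) :=
  Real.log_pos (lt_add_of_pos_left 1 (mul_pos (sub_pos.2 hα) hx))

theorem log_sub_one_mul_add_one_le (hx : 1 ≤ x) (hα : 1 < α) :
    Real.log ((α - 1) * x + 1) ≤ Real.log α + Real.log x := by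
  rw [← Real.log_mul (by positivity) (by positivity)]
  exact Real.log_le_log (add_pos (mul_pos (sub_pos.2 hα) (by linarith)) one_pos) (by linarith)

theorem log_add_one_pos (hx : Real.exp (-1) < x) : 0 < Real.log x + 1 := by
  linarith [(Real.lt_log_iff_exp_lt ((Real.exp_pos _).trans hx)).2 hx]

theorem temperatureRatio_le (hx : Real.exp (-1) < x) (hα : 1 < α) :
    temperatureRatio x α ≤ 1 / (Real.log x + 1) := by
  have hx_pos : 0 < x := (Real.exp_pos _).trans hx
  rw [temperatureRatio, div_le_div_iff₀ (log_sub_one_mul_add_one_pos hx_pos hα)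
    (log_add_one_pos hx), one_mul]
  exact one_sub_one_div_mul_log_add_one_le hx_pos hα.le

theorem le_temperatureRatio (hx : 1 ≤ x) (hα : 1 < α) :
    (1 - 1 / α) / (Real.log α + Real.log x) ≤ temperatureRatio x α :=
  div_le_div_of_nonneg_left
    (sub_nonneg.2 (div_le_one_of_le₀ hα.le (by linarith)))
    (log_sub_one_mul_add_one_pos (by linarith) hα)
    (log_sub_one_mul_add_one_le hx hα)

theorem criticalTemperature_le (hx : Real.exp (-1) < x) :
    criticalTemperature x ≤ 1 / (Real.log x + 1) :=
  csSup_le (nonempty_Ioi.image _) (forall_mem_image.2 fun _ hα => temperatureRatio_le hx hα)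

theorem temperatureRatio_le_criticalTemperature (hx : Real.exp (-1) < x) (hα : 1 < α) :
    temperatureRatio x α ≤ criticalTemperature x :=
  le_csSup ⟨1 / (Real.log x + 1), forall_mem_image.2 fun _ hβ => temperatureRatio_le hx hβ⟩
    (mem_image_of_mem _ hα)

theorem temperatureRatio_log_le_criticalTemperature (hx : Real.exp 1 < x) :
    temperatureRatio x (Real.log x) ≤ criticalTemperature x :=
  temperatureRatio_le_criticalTemperature ((Real.exp_lt_exp.2 (by norm_num)).trans hx)
    ((Real.lt_log_iff_exp_lt ((Real.exp_pos _).trans hx)).2 hx)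

theorem criticalTemperature_lt_one_div_log_sub_one (hx : 2 < x) :
    criticalTemperature x < 1 / Real.log (x - 1) := by
  have hx_exp : Real.exp (-1) < x := by
    linarith [Real.exp_lt_one_iff.2 (show (-1 : ℝ) < 0 by norm_num)]
  have log_sub_one_lt : Real.log (x - 1) < Real.log x + 1 := by
    linarith [Real.log_le_log (show 0 < x - 1 by linarith) (sub_le_self x zero_le_one)]
  exact (criticalTemperature_le hx_exp).trans_lt
    (one_div_lt_one_div_of_lt (Real.log_pos (by linarith)) log_sub_one_lt)

theorem criticalTemperature_mul_log_le_one (hx : 1 ≤ x) :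
    criticalTemperature x * Real.log x ≤ 1 := by
  have hx_exp : Real.exp (-1) < x := (Real.exp_lt_one_iff.2 (by norm_num)).trans_le hx
  have log_nonneg : 0 ≤ Real.log x := Real.log_nonneg hx
  calc criticalTemperature x * Real.log x
      ≤ 1 / (Real.log x + 1) * Real.log x := by
        gcongr
        exact criticalTemperature_le hx_exp
    _ ≤ 1 := by
        rw [one_div_mul_eq_div]
        exact div_le_one_of_le₀ (by linarith) (by linarith)

theorem le_criticalTemperature_mul_log (hx : Real.exp 1 < x) :
    (1 - 1 / Real.log x) / (Real.log (Real.log x) + Real.log x) * Real.log x ≤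
      criticalTemperature x * Real.log x := by
  have one_lt_x : 1 < x := (Real.one_lt_exp_iff.2 one_pos).trans hx
  have one_lt_log : 1 < Real.log x := (Real.lt_log_iff_exp_lt (by linarith)).2 hx
  gcongr
  exact (le_temperatureRatio one_lt_x.le one_lt_log).trans
    (temperatureRatio_log_le_criticalTemperature hx)

end Ratio

theorem tendsto_one_sub_one_div_div_log_add_mul_self :
    Tendsto (fun y : ℝ => (1 - 1 / y) / (Real.log y + y) * y) atTop (𝓝 1) := by
  have one_div_tendsto : Tendsto (fun y : ℝ => 1 / y) atTop (𝓝 0) :=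
    tendsto_const_nhds.div_atTop tendsto_id
  have log_div_tendsto : Tendsto (fun y : ℝ => Real.log y / y) atTop (𝓝 0) :=
    Real.isLittleO_log_id_atTop.tendsto_div_nhds_zero
  have quotient_tendsto :
      Tendsto (fun y : ℝ => (1 - 1 / y) / (Real.log y / y + 1)) atTop (𝓝 1) := by
    simpa [Pi.div_def] using
      (one_div_tendsto.const_sub 1).div (log_div_tendsto.add_const 1) (by norm_num)
  refine quotient_tendsto.congr' ?_
  filter_upwards [eventually_gt_atTop 0] with y hy
  rw [div_add_one hy.ne', div_div_eq_mul_div, mul_div_right_comm]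

theorem tendsto_criticalTemperature_mul_log :
    Tendsto (fun x : ℝ => criticalTemperature x * Real.log x) atTop (𝓝 1) := by
  refine tendsto_of_tendsto_of_tendsto_of_le_of_le'
    (tendsto_one_sub_one_div_div_log_add_mul_self.comp Real.tendsto_log_atTop)
    tendsto_const_nhds ?_ ?_
  · filter_upwards [eventually_gt_atTop (Real.exp 1)] with x hx
    exact le_criticalTemperature_mul_log hx
  · filter_upwards [eventually_ge_atTop 1] with x hx
    exact criticalTemperature_mul_log_le_one hx

theorem Tstar_bounds_and_asymptotics_general :
    (∀ x : ℝ, Real.exp 1 < x →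
      (1 - 1 / Real.log x) / Real.log ((Real.log x - 1) * x + 1) ≤ criticalTemperature x) ∧
    (∀ x : ℝ, 2 < x → criticalTemperature x < 1 / Real.log (x - 1)) ∧
    Tendsto (fun x : ℝ => criticalTemperature x * Real.log x) atTop (𝓝 1) :=
  ⟨fun _ hx => temperatureRatio_log_le_criticalTemperature hx,
    fun _ hx => criticalTemperature_lt_one_div_log_sub_one hx,
    tendsto_criticalTemperature_mul_log⟩

theorem exp_one_lt_natCast {n : ℕ} (hn : 2 < n) : Real.exp 1 < n :=
  Real.exp_one_lt_three.trans_le (by exact_mod_cast hn)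

/-- Bounds on the critical temperature `T*(n)` of the complete graph, and the
asymptotics `T*(n) ~ 1/ln n` as `n → ∞`. -/
theorem Tstar_bounds_and_asymptotics :
    (∀ n : ℕ, 2 < n →
      (1 - 1 / Real.log n) / Real.log ((Real.log n - 1) * n + 1) ≤ Tstar n ∧
      Tstar n < 1 / Real.log ((n : ℝ) - 1)) ∧
    Tendsto (fun n : ℕ => Tstar n * Real.log n) atTop (𝓝 1) := by
  obtain ⟨lower, upper, asymptotics⟩ := Tstar_bounds_and_asymptotics_general
  simp only [Tstar_eq_criticalTemperature]
  exact ⟨fun n hn => ⟨lower n (exp_one_lt_natCast hn), upper n (by exact_mod_cast hn)⟩,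
    asymptotics.comp tendsto_natCast_atTop_atTop⟩
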